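/- Let ν be a probability distribution on S, m ≥ 0 an integer, μ a stationary deterministic policy, and f a bounded measurable function on S. Suppose A_i < ∞ for all i ≥ 0 and Σ_{j=0}^∞ γ^j A_{m+j} < ∞. Then ∫ |f| dΛ ≤ (Σ_{j=0}^∞ γ^j A_{m+j}) ‖f‖_{1,ρ1}, where Λ = ν (P_{π^*})^m Σ_{j=0}^∞ γ^j (P_μ)^j is the unnormalized measure obtained by applying to ν the transition operator of the optimal policy m times followed by the Neumann series for [I − γ P_μ]^{−1}. -/

import Mathlib

open MeasureTheory
open scoped ENNReal

/-- Bellman operator for a fixed policy `π`: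
`(T_π V)(s) = r(s, π s) + γ ∫ V ds' p(ds'|s, π s)`. -/
noncomputable def Tpol {S : Type*} [MeasurableSpace S] {A : Type*}
    (p : S → A → Measure S) (r : S → A → ℝ) (γ : ℝ) (π : S → A)
    (V : S → ℝ) : S → ℝ :=
  fun s => r s (π s) + γ * ∫ s', V s' ∂(p s (π s))

/-- Bellman optimality operator:
`(T V)(s) = max_{a ∈ A} [ r(s,a) + γ ∫ V ds' p(ds'|s,a) ]`. -/
noncomputable def Tbell {S : Type*} [MeasurableSpace S] {A : Type*}
    (p : S → A → Measure S) (r : S → A → ℝ) (γ : ℝ)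
    (V : S → ℝ) : S → ℝ :=
  fun s => ⨆ a : A, (r s a + γ * ∫ s', V s' ∂(p s a))

/-- Right action of a policy's transition operator on measures: `ν P_π`. -/
noncomputable def Pmeas {S : Type*} [MeasurableSpace S] {A : Type*}
    (p : S → A → Measure S) (π : S → A) (ν : Measure S) : Measure S :=
  ν.bind fun s => p s (π s)

/-- Left action of a policy's transition operator on functions:
`(P_π V)(s) = ∫ V ds' p(ds'|s, π s)`. -/
noncomputable def Pfun {S : Type*} [MeasurableSpace S] {A : Type*}
    (p : S → A → Measure S) (π : S → A) (V : S → ℝ) : S → ℝ :=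
  fun s => ∫ s', V s' ∂(p s (π s))

/-- `‖f‖_{1,μ} = ∫ |f| dμ`. -/
noncomputable def L1 {S : Type*} [MeasurableSpace S] (f : S → ℝ) (μ : Measure S) : ℝ :=
  ∫ s, |f s| ∂μ

/-- Supremum norm `‖f‖_∞`. -/
noncomputable def supNorm {S : Type*} (f : S → ℝ) : ℝ := ⨆ s, |f s|

/-- The measure `ρ P_{μ_1} P_{μ_2} ⋯ P_{μ_m}` obtained by applying the transition
operators of a list of policies in succession, starting from `ρ`. -/
noncomputable def pushPol {S : Type*} [MeasurableSpace S] {A : Type*}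
    (p : S → A → Measure S) (ρ : Measure S) (μs : List (S → A)) : Measure S :=
  μs.foldl (fun ν π => Pmeas p π ν) ρ

/-- The `m`-step concentrability coefficient: the supremum over all sequences of `m`
measurable policies of the essential supremum of the Radon–Nikodym derivative
`d(base P_{μ_1} ⋯ P_{μ_m}) / d(ref)`.  (For `m = 0` it is `ess sup d(base)/d(ref)`.) -/
noncomputable def Aconc {S : Type*} [MeasurableSpace S] {A : Type*} [MeasurableSpace A]
    (p : S → A → Measure S) (base ref : Measure S) (m : ℕ) : ℝ≥0∞ :=
  ⨆ μs : Fin m → {π : S → A // Measurable π},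
    essSup ((pushPol p base (List.ofFn fun i => (μs i).1)).rnDeriv ref) ref

/-- The unnormalized measure `Λ = ν (P_{πs})^m ∑_{j=0}^∞ γ^j (P_{πn})^j`, i.e. `ν`
pushed `m` times through `P_{πs}` and then through the Neumann series for
`[I - γ P_{πn}]⁻¹`. -/
noncomputable def Lam {S : Type*} [MeasurableSpace S] {A : Type*}
    (p : S → A → Measure S) (γ : ℝ) (ν : Measure S) (πs πn : S → A) (m : ℕ) : Measure S :=
  Measure.sum fun j : ℕ =>
    ENNReal.ofReal (γ ^ j) • (fun μ => Pmeas p πn μ)^[j] ((fun μ => Pmeas p πs μ)^[m] ν)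

/-!
Each term of the Neumann series is, up to the factor `γ ^ j`, the initial distribution pushed
through a sequence of `m + j` policies. Its density with respect to the reference measure is at
most the `(m + j)`-step concentrability coefficient, so summing over `j` gives the inequality of
measures `Λ ≤ (∑ j, γ ^ j A_{m+j}) • ρ₁`, which is then integrated against `|f|`.
-/

open ProbabilityTheory

section MeasureDomination

variable {α ι : Type*} [MeasurableSpace α] {μ ν : Measure α}

theorem le_essSup_rnDeriv_smul [μ.HaveLebesgueDecomposition ν] (h : μ ≪ ν) :
    μ ≤ essSup (μ.rnDeriv ν) ν • ν :=
  calc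
    μ = ν.withDensity (μ.rnDeriv ν) := (Measure.withDensity_rnDeriv_eq μ ν h).symm
    _ ≤ ν.withDensity fun _ => essSup (μ.rnDeriv ν) ν :=
      withDensity_mono (ENNReal.ae_le_essSup _)
    _ = essSup (μ.rnDeriv ν) ν • ν := withDensity_const _

theorem sum_measure_le_tsum_smul {μ : ι → Measure α} {a : ι → ℝ≥0∞}
    (h : ∀ i, μ i ≤ a i • ν) : Measure.sum μ ≤ (∑' i, a i) • ν := by
  refine Measure.le_iff.2 fun s hs => ?_
  calc
    Measure.sum μ s = ∑' i, μ i s := Measure.sum_apply μ hs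
    _ ≤ ∑' i, a i * ν s := ENNReal.tsum_le_tsum fun i => h i s
    _ = ((∑' i, a i) • ν) s := ENNReal.tsum_mul_right

theorem integral_le_toReal_mul_of_le_smul {c : ℝ≥0∞} (hc : c ≠ ⊤) (h : μ ≤ c • ν) {f : α → ℝ}
    (hf₀ : 0 ≤ᵐ[ν] f) (hf : Integrable f ν) : ∫ x, f x ∂μ ≤ c.toReal * ∫ x, f x ∂ν :=
  calc
    ∫ x, f x ∂μ ≤ ∫ x, f x ∂(c • ν) :=
      integral_mono_measure h (Measure.ae_smul_measure hf₀ c) (hf.smul_measure hc)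
    _ = c.toReal * ∫ x, f x ∂ν := by rw [integral_smul_measure, smul_eq_mul]

theorem tsum_ofReal_mul_eq_ofReal_tsum {u : ι → ℝ} {a : ι → ℝ≥0∞} (hu : ∀ i, 0 ≤ u i)
    (ha : ∀ i, a i ≠ ⊤) (hs : Summable fun i => u i * (a i).toReal) :
    ∑' i, ENNReal.ofReal (u i) * a i = ENNReal.ofReal (∑' i, u i * (a i).toReal) := by
  rw [ENNReal.ofReal_tsum_of_nonneg (fun i => mul_nonneg (hu i) ENNReal.toReal_nonneg) hs]
  simp_rw [ENNReal.ofReal_mul (hu _), ENNReal.ofReal_toReal (ha _)]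

end MeasureDomination

section PushPol

variable {S A : Type*} [MeasurableSpace S] (p : S → A → Measure S)

theorem pushPol_append (ν : Measure S) (l l' : List (S → A)) :
    pushPol p ν (l ++ l') = pushPol p (pushPol p ν l) l' :=
  List.foldl_append

theorem pushPol_replicate (ν : Measure S) (π : S → A) (m : ℕ) :
    pushPol p ν (List.replicate m π) = (Pmeas p π)^[m] ν := by
  induction m generalizing ν with
  | zero => rfl
  | succ _ ih => exact ih (Pmeas p π ν)

theorem Lam_eq_sum_pushPol (γ : ℝ) (ν : Measure S) (π μ : S → A) (m : ℕ) :
    Lam p γ ν π μ m = Measure.sum fun j : ℕ =>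
      ENNReal.ofReal (γ ^ j) • pushPol p ν (List.replicate m π ++ List.replicate j μ) := by
  simp only [Lam, pushPol_append, pushPol_replicate]

theorem essSup_rnDeriv_pushPol_le_Aconc [MeasurableSpace A] (ν ρ : Measure S)
    {l : List (S → A)} (hl : ∀ π ∈ l, Measurable π) :
    essSup ((pushPol p ν l).rnDeriv ρ) ρ ≤ Aconc p ν ρ l.length := by
  simpa only [Aconc, List.get_eq_getElem, List.ofFn_getElem] using
    le_iSup (fun μs : Fin l.length → {π : S → A // Measurable π} =>
      essSup ((pushPol p ν (List.ofFn fun i => (μs i).1)).rnDeriv ρ) ρ)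
      fun i => ⟨l.get i, hl _ (l.get_mem i)⟩

end PushPol

section Concentrability

variable {S A : Type*} [MeasurableSpace S] [MeasurableSpace A]
  (κ : Kernel (S × A) S) [IsSFiniteKernel κ] {ν ρ : Measure S} [SFinite ν]

theorem sFinite_Pmeas (ν : Measure S) [SFinite ν] {π : S → A} (hπ : Measurable π) :
    SFinite (Pmeas (Function.curry κ) π ν) :=
  inferInstanceAs (SFinite (ν.bind (κ.comap (fun s => (s, π s)) (measurable_id.prodMk hπ))))

theorem sFinite_pushPol (ν : Measure S) [SFinite ν] {l : List (S → A)}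
    (hl : ∀ π ∈ l, Measurable π) : SFinite (pushPol (Function.curry κ) ν l) := by
  induction l generalizing ν with
  | nil => assumption
  | cons π l ih =>
    obtain ⟨hπ, hl⟩ := List.forall_mem_cons.1 hl
    have := sFinite_Pmeas κ ν hπ
    exact ih (Pmeas (Function.curry κ) π ν) hl

variable [SigmaFinite ρ]

theorem pushPol_le_Aconc_smul {l : List (S → A)} (hl : ∀ π ∈ l, Measurable π)
    (hac : pushPol (Function.curry κ) ν l ≪ ρ) :
    pushPol (Function.curry κ) ν l ≤ Aconc (Function.curry κ) ν ρ l.length • ρ := by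
  have := sFinite_pushPol κ ν hl
  refine (le_essSup_rnDeriv_smul hac).trans ?_
  gcongr
  exact essSup_rnDeriv_pushPol_le_Aconc _ ν ρ hl

theorem Lam_le_tsum_Aconc_smul (γ : ℝ) {π μ : S → A} (hπ : Measurable π) (hμ : Measurable μ)
    (hac : ∀ l : List (S → A), (∀ π ∈ l, Measurable π) → pushPol (Function.curry κ) ν l ≪ ρ)
    (m : ℕ) :
    Lam (Function.curry κ) γ ν π μ m ≤
      (∑' j : ℕ, ENNReal.ofReal (γ ^ j) * Aconc (Function.curry κ) ν ρ (m + j)) • ρ := by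
  rw [Lam_eq_sum_pushPol]
  refine sum_measure_le_tsum_smul fun j => ?_
  have hl : ∀ π' ∈ List.replicate m π ++ List.replicate j μ, Measurable π' := fun π' hπ' =>
    (List.mem_append.1 hπ').elim (fun h => List.eq_of_mem_replicate h ▸ hπ)
      fun h => List.eq_of_mem_replicate h ▸ hμ
  have hpush := pushPol_le_Aconc_smul κ hl (hac _ hl)
  rw [List.length_append, List.length_replicate, List.length_replicate] at hpush
  rw [mul_smul]
  gcongr

theorem neumann_measure_bound_general {γ : ℝ} (hγ : 0 ≤ γ) {π μ : S → A} (hπ : Measurable π)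
    (hμ : Measurable μ)
    (hac : ∀ l : List (S → A), (∀ π ∈ l, Measurable π) → pushPol (Function.curry κ) ν l ≪ ρ)
    {f : S → ℝ} (hf : Integrable f ρ) {m : ℕ}
    (hA : ∀ j : ℕ, Aconc (Function.curry κ) ν ρ (m + j) ≠ ⊤)
    (hsum : Summable fun j : ℕ => γ ^ j * (Aconc (Function.curry κ) ν ρ (m + j)).toReal) :
    ∫ s, |f s| ∂(Lam (Function.curry κ) γ ν π μ m) ≤
      (∑' j : ℕ, γ ^ j * (Aconc (Function.curry κ) ν ρ (m + j)).toReal) * L1 f ρ := by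
  have hγpow : ∀ j : ℕ, 0 ≤ γ ^ j := pow_nonneg hγ
  have hLam := Lam_le_tsum_Aconc_smul κ γ hπ hμ hac m
  rw [tsum_ofReal_mul_eq_ofReal_tsum hγpow hA hsum] at hLam
  have hbound := integral_le_toReal_mul_of_le_smul ENNReal.ofReal_ne_top hLam
    (.of_forall fun s => abs_nonneg (f s)) hf.abs
  rwa [ENNReal.toReal_ofReal
    (tsum_nonneg fun j => mul_nonneg (hγpow j) ENNReal.toReal_nonneg)] at hbound

end Concentrability

theorem neumann_measure_bound
    {S : Type*} [MeasurableSpace S] {A : Type*} [MeasurableSpace A] [Fintype A] [Nonempty A]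
    (p : S → A → Measure S) (r : S → A → ℝ) (γ Rmax : ℝ)
    (hp : ∀ s a, IsProbabilityMeasure (p s a))
    (hpm : Measurable (Function.uncurry p))
    (hr : ∀ s a, r s a ∈ Set.Icc (0 : ℝ) Rmax)
    (hγ : γ ∈ Set.Ico (0 : ℝ) 1)
    (Vstar : S → ℝ) (hVstarm : Measurable Vstar)
    (hVstarfix : Tbell p r γ Vstar = Vstar)
    (πstar : S → A) (hπstar : Measurable πstar)
    (hgreedy : Tpol p r γ πstar Vstar = Vstar)
    (ρ1 : Measure S) [IsProbabilityMeasure ρ1]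
    (ν : Measure S) [IsProbabilityMeasure ν]
    (habs : ∀ μs : List (S → A), (∀ π ∈ μs, Measurable π) → pushPol p ν μs ≪ ρ1)
    (m : ℕ) (μ : S → A) (hμ : Measurable μ)
    (f : S → ℝ) (hfm : Measurable f) (C : ℝ) (hfb : ∀ s, |f s| ≤ C)
    (hAfin : ∀ i : ℕ, Aconc p ν ρ1 i ≠ ⊤)
    (hsum : Summable fun j : ℕ => γ ^ j * (Aconc p ν ρ1 (m + j)).toReal) :
    ∫ s, |f s| ∂(Lam p γ ν πstar μ m)
      ≤ (∑' j : ℕ, γ ^ j * (Aconc p ν ρ1 (m + j)).toReal) * L1 f ρ1 := by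
  have : IsMarkovKernel (⟨Function.uncurry p, hpm⟩ : Kernel (S × A) S) := ⟨fun x => hp x.1 x.2⟩
  exact neumann_measure_bound_general ⟨Function.uncurry p, hpm⟩ hγ.1 hπstar hμ habs
    (.of_bound hfm.aestronglyMeasurable C (.of_forall hfb)) (fun j => hAfin (m + j)) hsum
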